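/- Under the interpolation setting, let T ≥ 1, λ_t = t/2 for t ≥ 0, step size η = 1/(8L√(T+1)), and at each step t weights w_{i,t} ≥ 0 with Σ_{i=1}^M w_{i,t} = 1 and max_i w_{i,t} ≤ 2/M. Define the momentum iterates by θ^{−1} = θ^0, z^0 = θ^0, z^{t+1} = z^t − η·Σ_{i=1}^M w_{i,t} ∇f_i(θ^t), and θ^{t+1} = (λ_{t+1}·θ^t + z^{t+1})/(1 + λ_{t+1}). Then f(θ^T) − f(θ*) ≤ 8L‖θ^0 − θ*‖²/√(T+1) + (2/(T+1))·Σ_{t=0}^{T−1} δ_t + (2/(T+1))·Σ_{t=0}^{T−1} λ_t·μ_t, where δ_t = Σ_{i=1}^M (1/M − w_{i,t})·(f_i(θ^t) − f_i(θ*)) and μ_t = Σ_{i=1}^M (1/M − w_{i,t})·(f_i(θ^t) − f_i(θ^{t−1})). -/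

import Mathlib

open scoped InnerProductSpace BigOperators

/-!
At time `t` the reweighted gradient is the gradient of the surrogate `h t = ∑ i, w t i * f i`,
which is again convex and `L`-smooth. By interpolation it has the same minimizer `x₀` as the target
`F`, so `‖∇h t‖² ≤ 4L (h t - h t x₀)`, and the cap on the weights gives
`h t - h t x₀ ≤ 2 (F - F x₀)`. The iterates satisfy
`z t - x₀ = (θ t - x₀) + λ t • (θ t - θ (t - 1))`. Expanding `‖z (t + 1) - x₀‖²` and using convexity
of `h t` at `θ t` against both `x₀` and `θ (t - 1)`, one finds that the potential
`2 η λ t (F (θ (t - 1)) - F x₀) + ‖z t - x₀‖²` grows in each step by at most the error of replacing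
`F` by `h t`. Since `θ T` is a convex combination of `θ (T - 1)` and `z T`, and `F - F x₀` is at
most `L ‖· - x₀‖²`, the last potential dominates `2 η (1 + λ T) (F (θ T) - F x₀)`.
-/

variable {E : Type*} [NormedAddCommGroup E] [InnerProductSpace ℝ E]

/-- First-order form of "`f` is convex and `L`-smooth": `G` selects a subgradient of `f` at every
point and is `L`-Lipschitz. Taking `G` as data avoids gradients, hence completeness of `E`; it is
necessarily the gradient of `f`. -/
structure HasLipschitzSubgradient (L : ℝ) (f : E → ℝ) (G : E → E) : Prop where
  add_inner_le : ∀ x y, f x + ⟪G x, y - x⟫_ℝ ≤ f y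
  norm_sub_le : ∀ x y, ‖G x - G y‖ ≤ L * ‖x - y‖

namespace HasLipschitzSubgradient

variable {L : ℝ} {f : E → ℝ} {G : E → E}

lemma sub_le_inner (hf : HasLipschitzSubgradient L f G) (x y : E) :
    f x - f y ≤ ⟪G x, x - y⟫_ℝ := by
  have h := hf.add_inner_le x y
  rw [← neg_sub x y, inner_neg_right] at h
  linarith

lemma convexOn (hf : HasLipschitzSubgradient L f G) : ConvexOn ℝ Set.univ f := by
  refine ⟨convex_univ, fun x _ y _ a b ha hb hab => ?_⟩
  set c := a • x + b • y with hc
  have hbalance : a * ⟪G c, c - x⟫_ℝ + b * ⟪G c, c - y⟫_ℝ = 0 := by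
    have hsub : a • (c - x) + b • (c - y) = (a + b) • c - c := by rw [hc]; module
    rw [← inner_smul_right, ← inner_smul_right, ← inner_add_right, hsub, hab, one_smul, sub_self,
      inner_zero_right]
  have hx := mul_le_mul_of_nonneg_left (hf.sub_le_inner c x) ha
  have hy := mul_le_mul_of_nonneg_left (hf.sub_le_inner c y) hb
  simp only [smul_eq_mul]
  linear_combination hx + hy + hbalance - f c * hab

-- Convexity alone yields the descent lemma with `L` in place of the sharp `L / 2`.
lemma le_add_inner_add_norm_sq (hf : HasLipschitzSubgradient L f G) (x y : E) :
    f y ≤ f x + ⟪G x, y - x⟫_ℝ + L * ‖y - x‖ ^ 2 := by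
  have hcauchy : ⟪G y - G x, y - x⟫_ℝ ≤ L * ‖y - x‖ ^ 2 := calc
    ⟪G y - G x, y - x⟫_ℝ ≤ ‖G y - G x‖ * ‖y - x‖ := real_inner_le_norm _ _
    _ ≤ L * ‖y - x‖ * ‖y - x‖ := by gcongr; exact hf.norm_sub_le y x
    _ = L * ‖y - x‖ ^ 2 := by ring
  rw [inner_sub_left] at hcauchy
  linarith [hf.sub_le_inner y x]

lemma norm_sq_le_of_forall_le (hf : HasLipschitzSubgradient L f G) (hL : 0 < L) {c : ℝ}
    (hc : ∀ y, c ≤ f y) (x : E) : ‖G x‖ ^ 2 ≤ 4 * L * (f x - c) := by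
  -- The step length `1 / (2L)` minimizes the quadratic upper bound along `-G x`.
  set r := 1 / (2 * L) with hr
  have hstep := (hc _).trans (hf.le_add_inner_add_norm_sq x (x - r • G x))
  rw [sub_sub_cancel_left, inner_neg_right, real_inner_smul_right, real_inner_self_eq_norm_sq,
    norm_neg, norm_smul, mul_pow, Real.norm_eq_abs, sq_abs] at hstep
  have hdecrease : 4 * L * (r * ‖G x‖ ^ 2 - L * (r ^ 2 * ‖G x‖ ^ 2)) = ‖G x‖ ^ 2 := by
    rw [hr]; field_simp; ring
  rw [← hdecrease]
  exact mul_le_mul_of_nonneg_left (by linarith) (by positivity)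

lemma eq_zero_of_forall_le (hf : HasLipschitzSubgradient L f G) (hL : 0 < L) {x₀ : E}
    (hmin : ∀ x, f x₀ ≤ f x) : G x₀ = 0 := by
  have h := hf.norm_sq_le_of_forall_le hL hmin x₀
  rw [sub_self, mul_zero] at h
  exact norm_eq_zero.1 (sq_nonpos_iff _ |>.1 h)

lemma sub_le_mul_norm_sq (hf : HasLipschitzSubgradient L f G) (hL : 0 < L) {x₀ : E}
    (hmin : ∀ x, f x₀ ≤ f x) (x : E) : f x - f x₀ ≤ L * ‖x - x₀‖ ^ 2 := by
  have h := hf.le_add_inner_add_norm_sq x₀ x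
  rw [hf.eq_zero_of_forall_le hL hmin, inner_zero_left] at h
  linarith

lemma sum {ι : Type*} {s : Finset ι} {p : ι → ℝ} {f : ι → E → ℝ} {G : ι → E → E}
    (hf : ∀ i ∈ s, HasLipschitzSubgradient L (f i) (G i)) (hp₀ : ∀ i ∈ s, 0 ≤ p i)
    (hp₁ : ∑ i ∈ s, p i = 1) :
    HasLipschitzSubgradient L (fun x => ∑ i ∈ s, p i * f i x) (fun x => ∑ i ∈ s, p i • G i x) where
  add_inner_le x y := by
    simp only [sum_inner, real_inner_smul_left, ← Finset.sum_add_distrib, ← mul_add]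
    exact Finset.sum_le_sum fun i hi =>
      mul_le_mul_of_nonneg_left ((hf i hi).add_inner_le x y) (hp₀ i hi)
  norm_sub_le x y := calc
    ‖∑ i ∈ s, p i • G i x - ∑ i ∈ s, p i • G i y‖ = ‖∑ i ∈ s, p i • (G i x - G i y)‖ := by
      simp only [smul_sub, Finset.sum_sub_distrib]
    _ ≤ ∑ i ∈ s, p i * (L * ‖x - y‖) := norm_sum_le_of_le s fun i hi => by
      rw [norm_smul, Real.norm_of_nonneg (hp₀ i hi)]
      exact mul_le_mul_of_nonneg_left ((hf i hi).norm_sub_le x y) (hp₀ i hi)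
    _ = L * ‖x - y‖ := by rw [← Finset.sum_mul, hp₁, one_mul]

end HasLipschitzSubgradient

/-- Heavy-ball momentum in its iterate-averaging form: `z` follows the directions `g` with step
size `η`, and `θ (t + 1)` averages `θ t` and `z (t + 1)` with weights proportional to `lam (t + 1)`
and `1`. -/
structure IsHeavyBall (η : ℝ) (lam : ℕ → ℝ) (g θ z : ℕ → E) : Prop where
  z_zero : z 0 = θ 0
  z_succ : ∀ t, z (t + 1) = z t - η • g t
  θ_succ : ∀ t, θ (t + 1) = (1 / (1 + lam (t + 1))) • (lam (t + 1) • θ t + z (t + 1))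

namespace IsHeavyBall

section Iterates

variable {η : ℝ} {lam : ℕ → ℝ} {g θ z : ℕ → E}

lemma z_eq (hrun : IsHeavyBall η lam g θ z) (hlam : ∀ t, 0 ≤ lam t) (t : ℕ) :
    z t = θ t + lam t • (θ t - θ (t - 1)) := by
  cases t with
  | zero => simp [hrun.z_zero]
  | succ n =>
    have havg : (1 + lam (n + 1)) • θ (n + 1) = lam (n + 1) • θ n + z (n + 1) := by
      rw [hrun.θ_succ n, smul_smul, mul_one_div_cancel (by linarith [hlam (n + 1)]), one_smul]
    rw [← sub_eq_iff_eq_add'.2 havg, Nat.add_sub_cancel]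
    module

lemma norm_z_succ_sub_sq (hrun : IsHeavyBall η lam g θ z) (x : E) (t : ℕ) :
    ‖z (t + 1) - x‖ ^ 2 =
      ‖z t - x‖ ^ 2 - 2 * η * ⟪g t, z t - x⟫_ℝ + η ^ 2 * ‖g t‖ ^ 2 := by
  rw [hrun.z_succ, sub_right_comm, norm_sub_sq_real, real_inner_smul_right, real_inner_comm,
    norm_smul, mul_pow, Real.norm_eq_abs, sq_abs]
  ring

lemma one_add_mul_le_of_convexOn (hrun : IsHeavyBall η lam g θ z) (hlam : ∀ t, 0 ≤ lam t)
    {F : E → ℝ} (hF : ConvexOn ℝ Set.univ F) (t : ℕ) :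
    (1 + lam t) * F (θ t) ≤ lam t * F (θ (t - 1)) + F (z t) := by
  have hpos : 0 < 1 + lam t := by linarith [hlam t]
  have hθ : (lam t / (1 + lam t)) • θ (t - 1) + (1 / (1 + lam t)) • z t = θ t := by
    rw [hrun.z_eq hlam t]
    match_scalars <;> field_simp
    ring
  have hjensen := hF.2 (Set.mem_univ (θ (t - 1))) (Set.mem_univ (z t))
    (div_nonneg (hlam t) hpos.le) (one_div_nonneg.2 hpos.le) (by field_simp; ring)
  rw [hθ, smul_eq_mul, smul_eq_mul] at hjensen
  calc (1 + lam t) * F (θ t)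
      ≤ (1 + lam t) * (lam t / (1 + lam t) * F (θ (t - 1)) + 1 / (1 + lam t) * F (z t)) := by
        gcongr
    _ = lam t * F (θ (t - 1)) + F (z t) := by field_simp

end Iterates

/-- The Lyapunov function of a run at time `t`: the squared distance of `z t` to the minimizer `x₀`
plus the suboptimality of the previous iterate, weighted by the momentum. At `t = 0` the previous
iterate is `θ (0 - 1) = θ 0`. -/
noncomputable def potential (η : ℝ) (lam : ℕ → ℝ) (F : E → ℝ) (θ z : ℕ → E) (x₀ : E) (t : ℕ) : ℝ :=
  2 * η * (lam t * (F (θ (t - 1)) - F x₀)) + ‖z t - x₀‖ ^ 2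

section Surrogates

variable {L κ η : ℝ} {lam : ℕ → ℝ} {F : E → ℝ} {h : ℕ → E → ℝ} {G : ℕ → E → E} {θ z : ℕ → E}
  {x₀ : E}

lemma le_inner_z_sub (hrun : IsHeavyBall η lam (fun t => G t (θ t)) θ z)
    (hlam : ∀ t, 0 ≤ lam t) (hh : ∀ t, HasLipschitzSubgradient L (h t) (G t)) (x : E) (t : ℕ) :
    (h t (θ t) - h t x) + lam t * (h t (θ t) - h t (θ (t - 1))) ≤
      ⟪G t (θ t), z t - x⟫_ℝ := by
  rw [hrun.z_eq hlam t, add_sub_right_comm, inner_add_right, real_inner_smul_right]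
  gcongr
  · exact (hh t).sub_le_inner _ _
  · exact hlam t
  · exact (hh t).sub_le_inner _ _

lemma potential_succ_le_add (hrun : IsHeavyBall η lam (fun t => G t (θ t)) θ z)
    (hL : 0 < L) (hη : 0 ≤ η) (hlam : ∀ t, 0 ≤ lam t)
    (hlam_succ : ∀ t, lam (t + 1) + 2 * κ * L * η ≤ lam t + 1)
    (hFmin : ∀ x, F x₀ ≤ F x) (hh : ∀ t, HasLipschitzSubgradient L (h t) (G t))
    (hmin : ∀ t x, h t x₀ ≤ h t x) (hdom : ∀ t x, h t x - h t x₀ ≤ κ * (F x - F x₀)) (t : ℕ) :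
    potential η lam F θ z x₀ (t + 1) ≤ potential η lam F θ z x₀ t +
      2 * η * (((F - h t) (θ t) - (F - h t) x₀) +
        lam t * ((F - h t) (θ t) - (F - h t) (θ (t - 1)))) := by
  have hgrad : ‖G t (θ t)‖ ^ 2 ≤ 4 * L * (κ * (F (θ t) - F x₀)) :=
    ((hh t).norm_sq_le_of_forall_le hL (hmin t) _).trans (by gcongr; exact hdom t _)
  have hinner := mul_le_mul_of_nonneg_left (hrun.le_inner_z_sub hlam hh x₀ t)
    (mul_nonneg zero_le_two hη)
  have hsq := mul_le_mul_of_nonneg_left hgrad (sq_nonneg η)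
  -- The growth condition on `lam` leaves room to absorb the squared gradient.
  have hslack := mul_le_mul_of_nonneg_left (hlam_succ t)
    (mul_nonneg (mul_nonneg zero_le_two hη) (sub_nonneg.2 (hFmin (θ t))))
  simp only [potential, hrun.norm_z_succ_sub_sq, Pi.sub_apply, Nat.add_sub_cancel]
  linear_combination hinner + hsq + hslack

lemma potential_le_add (hrun : IsHeavyBall η lam (fun t => G t (θ t)) θ z)
    (hL : 0 < L) (hη : 0 ≤ η) (hlam_zero : lam 0 = 0) (hlam : ∀ t, 0 ≤ lam t)
    (hlam_succ : ∀ t, lam (t + 1) + 2 * κ * L * η ≤ lam t + 1)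
    (hFmin : ∀ x, F x₀ ≤ F x) (hh : ∀ t, HasLipschitzSubgradient L (h t) (G t))
    (hmin : ∀ t x, h t x₀ ≤ h t x) (hdom : ∀ t x, h t x - h t x₀ ≤ κ * (F x - F x₀)) (T : ℕ) :
    potential η lam F θ z x₀ T ≤ ‖θ 0 - x₀‖ ^ 2 +
      2 * η * (∑ t ∈ Finset.range T, ((F - h t) (θ t) - (F - h t) x₀) +
        ∑ t ∈ Finset.range T, lam t * ((F - h t) (θ t) - (F - h t) (θ (t - 1)))) := by
  induction T with
  | zero => simp [potential, hlam_zero, hrun.z_zero]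
  | succ n ih =>
    rw [Finset.sum_range_succ, Finset.sum_range_succ]
    linear_combination
      hrun.potential_succ_le_add hL hη hlam hlam_succ hFmin hh hmin hdom n + ih

lemma two_mul_one_add_mul_sub_le_potential {g : ℕ → E} (hrun : IsHeavyBall η lam g θ z)
    (hL : 0 < L) (hη : 0 ≤ η) (hηL : 2 * η * L ≤ 1) (hlam : ∀ t, 0 ≤ lam t) {GF : E → E}
    (hF : HasLipschitzSubgradient L F GF) (hFmin : ∀ x, F x₀ ≤ F x) (t : ℕ) :
    2 * η * ((1 + lam t) * (F (θ t) - F x₀)) ≤ potential η lam F θ z x₀ t := by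
  have hconv := hrun.one_add_mul_le_of_convexOn hlam hF.convexOn t
  have hquad := hF.sub_le_mul_norm_sq hL hFmin (z t)
  unfold potential
  linear_combination (2 * η) * hconv + (2 * η) * hquad + ‖z t - x₀‖ ^ 2 * hηL

theorem last_iterate_le (hrun : IsHeavyBall η lam (fun t => G t (θ t)) θ z)
    (hL : 0 < L) (hη : 0 < η) (hηL : 2 * η * L ≤ 1)
    (hlam_zero : lam 0 = 0) (hlam : ∀ t, 0 ≤ lam t)
    (hlam_succ : ∀ t, lam (t + 1) + 2 * κ * L * η ≤ lam t + 1)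
    {GF : E → E} (hF : HasLipschitzSubgradient L F GF) (hFmin : ∀ x, F x₀ ≤ F x)
    (hh : ∀ t, HasLipschitzSubgradient L (h t) (G t))
    (hmin : ∀ t x, h t x₀ ≤ h t x) (hdom : ∀ t x, h t x - h t x₀ ≤ κ * (F x - F x₀)) (T : ℕ) :
    (1 + lam T) * (F (θ T) - F x₀) ≤ ‖θ 0 - x₀‖ ^ 2 / (2 * η) +
      (∑ t ∈ Finset.range T, ((F - h t) (θ t) - (F - h t) x₀) +
        ∑ t ∈ Finset.range T, lam t * ((F - h t) (θ t) - (F - h t) (θ (t - 1)))) := by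
  have hpotential := hrun.potential_le_add hL hη.le hlam_zero hlam hlam_succ hFmin hh hmin hdom T
  have hlast := hrun.two_mul_one_add_mul_sub_le_potential hL hη.le hηL hlam hF hFmin T
  rw [← sub_le_iff_le_add, le_div_iff₀ (by positivity)]
  linarith

theorem last_iterate_le_of_linear_momentum (hrun : IsHeavyBall η lam (fun t => G t (θ t)) θ z)
    (hL : 0 < L) {T : ℕ} (hη : η = 1 / (8 * L * √((T : ℝ) + 1))) (hlam : ∀ t, lam t = (t : ℝ) / 2)
    {GF : E → E} (hF : HasLipschitzSubgradient L F GF) (hFmin : ∀ x, F x₀ ≤ F x)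
    (hh : ∀ t, HasLipschitzSubgradient L (h t) (G t))
    (hmin : ∀ t x, h t x₀ ≤ h t x) (hdom : ∀ t x, h t x - h t x₀ ≤ 2 * (F x - F x₀)) :
    F (θ T) - F x₀ ≤ 8 * L * ‖θ 0 - x₀‖ ^ 2 / √((T : ℝ) + 1) +
      2 / ((T : ℝ) + 1) * ∑ t ∈ Finset.range T, ((F - h t) (θ t) - (F - h t) x₀) +
      2 / ((T : ℝ) + 1) *
        ∑ t ∈ Finset.range T, lam t * ((F - h t) (θ t) - (F - h t) (θ (t - 1))) := by
  set s := √((T : ℝ) + 1)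
  have hs_one : 1 ≤ s := Real.one_le_sqrt.2 (by simp)
  have hs_sq : (T : ℝ) + 1 = s ^ 2 := (Real.sq_sqrt (by positivity)).symm
  have hη_pos : 0 < η := by rw [hη]; positivity
  have hηL : 8 * (η * L) ≤ 1 := by
    have : 8 * (η * L) = 1 / s := by rw [hη]; field_simp
    rw [this]
    exact div_le_one_of_le₀ hs_one (by positivity)
  have hbound := hrun.last_iterate_le hL hη_pos (by linarith [mul_pos hη_pos hL])
    (by simp [hlam]) (fun t => by rw [hlam]; positivity)
    (fun t => by rw [hlam, hlam]; push_cast; linarith) hF hFmin hh hmin hdom T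
  rw [hlam T] at hbound
  have hhalf : s ^ 2 / 2 * (F (θ T) - F x₀) ≤ (1 + (T : ℝ) / 2) * (F (θ T) - F x₀) :=
    mul_le_mul_of_nonneg_right (by linarith) (sub_nonneg.2 (hFmin _))
  have hη_inv : ‖θ 0 - x₀‖ ^ 2 / (2 * η) = 4 * L * s * ‖θ 0 - x₀‖ ^ 2 := by
    rw [hη]; field_simp; ring
  rw [hη_inv] at hbound
  rw [hs_sq]
  calc F (θ T) - F x₀
      = 2 / s ^ 2 * (s ^ 2 / 2 * (F (θ T) - F x₀)) := by field_simp
    _ ≤ 2 / s ^ 2 * (4 * L * s * ‖θ 0 - x₀‖ ^ 2 + (_ + _)) := by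
        gcongr
        exact hhalf.trans hbound
    _ = _ := by field_simp; ring

end Surrogates

end IsHeavyBall

lemma sum_sub_mul_sub {ι : Type*} (s : Finset ι) (p w a b : ι → ℝ) :
    ∑ i ∈ s, (p i - w i) * (a i - b i) =
      (∑ i ∈ s, p i * a i - ∑ i ∈ s, w i * a i) - (∑ i ∈ s, p i * b i - ∑ i ∈ s, w i * b i) := by
  simp only [sub_mul, mul_sub, Finset.sum_sub_distrib]

lemma sum_mul_sub_sum_mul_le {ι : Type*} {s : Finset ι} {κ : ℝ} {p w a b : ι → ℝ}
    (hw : ∀ i ∈ s, w i ≤ κ * p i) (hab : ∀ i ∈ s, b i ≤ a i) :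
    ∑ i ∈ s, w i * a i - ∑ i ∈ s, w i * b i ≤
      κ * (∑ i ∈ s, p i * a i - ∑ i ∈ s, p i * b i) := by
  simp only [← Finset.sum_sub_distrib, ← mul_sub, Finset.mul_sum, ← mul_assoc]
  exact Finset.sum_le_sum fun i hi =>
    mul_le_mul_of_nonneg_right (hw i hi) (sub_nonneg.2 (hab i hi))

theorem stmt_11_general {ι : Type*} [Fintype ι] {L : ℝ} (hL : 0 < L)
    {f : ι → E → ℝ} {G : ι → E → E} (hf : ∀ i, HasLipschitzSubgradient L (f i) (G i))
    {x₀ : E} (hmin : ∀ i x, f i x₀ ≤ f i x) {T : ℕ}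
    {lam : ℕ → ℝ} (hlam : ∀ t, lam t = (t : ℝ) / 2)
    {η : ℝ} (hη : η = 1 / (8 * L * √((T : ℝ) + 1)))
    {p : ι → ℝ} (hp : ∑ i, p i = 1) {w : ℕ → ι → ℝ} (hw₀ : ∀ t i, 0 ≤ w t i)
    (hw₁ : ∀ t, ∑ i, w t i = 1) (hwp : ∀ t i, w t i ≤ 2 * p i) {θ z : ℕ → E}
    (hrun : IsHeavyBall η lam (fun t => ∑ i, w t i • G i (θ t)) θ z) :
    ∑ i, p i * f i (θ T) - ∑ i, p i * f i x₀ ≤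
      8 * L * ‖θ 0 - x₀‖ ^ 2 / √((T : ℝ) + 1) +
        2 / ((T : ℝ) + 1) *
          ∑ t ∈ Finset.range T, ∑ i, (p i - w t i) * (f i (θ t) - f i x₀) +
        2 / ((T : ℝ) + 1) *
          ∑ t ∈ Finset.range T, lam t * ∑ i, (p i - w t i) * (f i (θ t) - f i (θ (t - 1))) := by
  have hp₀ (i : ι) : 0 ≤ p i := by linarith [hw₀ 0 i, hwp 0 i]
  have hmin_sum {q : ι → ℝ} (hq : ∀ i, 0 ≤ q i) (x : E) :
      ∑ i, q i * f i x₀ ≤ ∑ i, q i * f i x :=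
    Finset.sum_le_sum fun i _ => mul_le_mul_of_nonneg_left (hmin i x) (hq i)
  simp only [sum_sub_mul_sub]
  exact hrun.last_iterate_le_of_linear_momentum (F := fun x => ∑ i, p i * f i x)
    (h := fun t x => ∑ i, w t i * f i x) (G := fun t x => ∑ i, w t i • G i x) hL hη hlam
    (.sum (fun i _ => hf i) (fun i _ => hp₀ i) hp) (hmin_sum hp₀)
    (fun t => .sum (fun i _ => hf i) (fun i _ => hw₀ t i) (hw₁ t)) (fun t => hmin_sum (hw₀ t))
    (fun t x => sum_mul_sub_sum_mul_le (fun i _ => hwp t i) (fun i _ => hmin i x))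

/-- Reweighted full-batch gradient descent with heavy-ball momentum
(`λ_t = t/2`, `η = 1/(8L√(T+1))`) under the interpolation regime: convergence
bound with the reweighting excess terms `δ_t` and `μ_t`.  Here `θ (t - 1)` with
natural subtraction encodes the convention `θ^{-1} = θ^0`. -/
theorem stmt_11 {d M : ℕ} (hM : 0 < M) (L : ℝ) (hL : 0 < L)
    (f : Fin M → EuclideanSpace ℝ (Fin d) → ℝ)
    (hdiff : ∀ i, Differentiable ℝ (f i))
    (hconv : ∀ i, ∀ θ₁ θ₂ : EuclideanSpace ℝ (Fin d),
      f i θ₂ + ⟪gradient (f i) θ₂, θ₁ - θ₂⟫_ℝ ≤ f i θ₁)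
    (hsmooth : ∀ i, ∀ θ θ' : EuclideanSpace ℝ (Fin d),
      ‖gradient (f i) θ - gradient (f i) θ'‖ ≤ L * ‖θ - θ'‖)
    (θstar : EuclideanSpace ℝ (Fin d))
    (hinterp : ∀ i θ, f i θstar ≤ f i θ)
    (T : ℕ) (hT : 1 ≤ T)
    (lam : ℕ → ℝ) (hlam : ∀ t, lam t = (t : ℝ) / 2)
    (η : ℝ) (hη : η = 1 / (8 * L * Real.sqrt ((T : ℝ) + 1)))
    (w : ℕ → Fin M → ℝ)
    (hw0 : ∀ t i, 0 ≤ w t i)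
    (hw1 : ∀ t, ∑ i, w t i = 1)
    (hwmax : ∀ t i, w t i ≤ 2 / (M : ℝ))
    (θ z : ℕ → EuclideanSpace ℝ (Fin d))
    (hz0 : z 0 = θ 0)
    (hzupd : ∀ t, z (t + 1) = z t - η • ∑ i, w t i • gradient (f i) (θ t))
    (hθupd : ∀ t, θ (t + 1)
      = (1 / (1 + lam (t + 1))) • (lam (t + 1) • θ t + z (t + 1))) :
    (1 / (M : ℝ)) * ∑ i, f i (θ T) - (1 / (M : ℝ)) * ∑ i, f i θstar
      ≤ 8 * L * ‖θ 0 - θstar‖ ^ 2 / Real.sqrt ((T : ℝ) + 1)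
        + (2 / ((T : ℝ) + 1)) * ∑ t ∈ Finset.range T,
            ∑ i, ((1 / (M : ℝ)) - w t i) * (f i (θ t) - f i θstar)
        + (2 / ((T : ℝ) + 1)) * ∑ t ∈ Finset.range T,
            lam t * ∑ i, ((1 / (M : ℝ)) - w t i) * (f i (θ t) - f i (θ (t - 1))) := by
  simpa only [Finset.mul_sum] using
    stmt_11_general hL (fun i => ⟨fun x y => hconv i y x, hsmooth i⟩) hinterp hlam hη
      (p := fun _ => 1 / (M : ℝ)) (by simp [hM.ne']) hw0 hw1
      (fun t i => (hwmax t i).trans_eq (by ring)) ⟨hz0, hzupd, hθupd⟩
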